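/- Under the observer setup, let X be an n×n real symmetric positive definite matrix and Y an n×n_y real matrix such that the block matrix [[(X·A + Y·C_y) + (X·A + Y·C_y)ᵀ, X·B_d·S_d + Y·D_d·S_d, C_zᵀ, Y], [(X·B_d·S_d + Y·D_d·S_d)ᵀ, -γ·I_{n_d}, 0, 0], [C_z, 0, -γ·I_{n_z}, 0], [Yᵀ, 0, 0, -diag(β)]] is negative definite for some real γ > 0 and some vector β ∈ ℝ^{n_y} with positive entries. Then every complex eigenvalue of A + X⁻¹·Y·C_y has negative real part, i.e., the observer gain L = X⁻¹·Y makes the error dynamics matrix A + L·C_y Hurwitz. -/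

import Mathlib

open Matrix

/-- A real symmetric matrix `M` is negative definite if `xᵀ M x < 0` for all `x ≠ 0`. -/
def NegDef {n : Type*} [Fintype n] (M : Matrix n n ℝ) : Prop :=
  M.IsSymm ∧ ∀ x : n → ℝ, x ≠ 0 → x ⬝ᵥ M.mulVec x < 0

/-!
Restricted to its leading block, the LMI says that `X * M + (X * M)ᵀ` is negative definite, where
`M = A + X⁻¹ * Y * C_y` satisfies `X * M = X * A + Y * C_y`; this is Lyapunov's inequality for `M`
with certificate `X`. It stays valid over `ℂ`, and evaluating it at an eigenvector `v` of `M` with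
eigenvalue `μ` gives `2 * re μ * (v* X v) < 0`, while `v* X v ≥ 0`.
-/

section Lyapunov

variable {n 𝕜 : Type*} [RCLike 𝕜]

open scoped ComplexOrder

theorem re_star_dotProduct_conjTranspose_mulVec [Fintype n] (N : Matrix n n 𝕜) (v : n → 𝕜) :
    RCLike.re (star v ⬝ᵥ Nᴴ *ᵥ v) = RCLike.re (star v ⬝ᵥ N *ᵥ v) := by
  have conj_form : star v ⬝ᵥ Nᴴ *ᵥ v = star (star v ⬝ᵥ N *ᵥ v) := by
    rw [star_dotProduct, star_mulVec, conjTranspose_conjTranspose, ← dotProduct_mulVec]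
  rw [conj_form, RCLike.star_def, RCLike.conj_re]

theorem re_eigenvalue_neg_of_posDef_neg_lyapunov [Fintype n] {P M : Matrix n n 𝕜}
    (hP : P.PosSemidef) (hPM : (-(P * M + (P * M)ᴴ)).PosDef) {μ : 𝕜}
    (hμ : Module.End.HasEigenvalue M.mulVecLin μ) : RCLike.re μ < 0 := by
  obtain ⟨v, hv⟩ := hμ.exists_hasEigenvector
  have eigen : M *ᵥ v = μ • v := hv.apply_eq_smul
  have form_nonneg : 0 ≤ RCLike.re (star v ⬝ᵥ P *ᵥ v) := hP.re_dotProduct_nonneg v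
  have form_im : RCLike.im (star v ⬝ᵥ P *ᵥ v) = 0 :=
    (RCLike.nonneg_iff.mp (hP.dotProduct_mulVec_nonneg v)).2
  have form_mul :
      RCLike.re (star v ⬝ᵥ (P * M) *ᵥ v) = RCLike.re μ * RCLike.re (star v ⬝ᵥ P *ᵥ v) := by
    rw [← mulVec_mulVec, eigen, mulVec_smul, dotProduct_smul, smul_eq_mul, RCLike.mul_re, form_im,
      mul_zero, sub_zero]
  have lyapunov : 0 < -(2 * (RCLike.re μ * RCLike.re (star v ⬝ᵥ P *ᵥ v))) := by
    have h := hPM.re_dotProduct_pos hv.2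
    rwa [neg_mulVec, dotProduct_neg, add_mulVec, dotProduct_add, map_neg, map_add,
      re_star_dotProduct_conjTranspose_mulVec, form_mul, ← two_mul] at h
  by_contra! re_nonneg
  linarith [mul_nonneg re_nonneg form_nonneg]

end Lyapunov

section ScalarExtension

variable {n 𝕜 𝕜' : Type*} [RCLike 𝕜] [RCLike 𝕜']

open scoped ComplexOrder MatrixOrder

theorem posSemidef_map [Finite n] {M : Matrix n n 𝕜} (hM : M.PosSemidef)
    (f : 𝕜 →+* 𝕜') (hf : Function.Semiconj f star star) : (M.map f).PosSemidef := by
  classical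
  cases nonempty_fintype n
  obtain ⟨B, rfl⟩ := CStarAlgebra.nonneg_iff_eq_star_mul_self.mp hM.nonneg
  have gram : (star B * B).map f = (B.map f)ᴴ * B.map f := by
    rw [Matrix.map_mul, star_eq_conjTranspose, conjTranspose_map f hf]
  exact gram ▸ posSemidef_conjTranspose_mul_self (B.map f)

theorem posDef_map [Finite n] {M : Matrix n n 𝕜} (hM : M.PosDef)
    (f : 𝕜 →+* 𝕜') (hf : Function.Semiconj f star star) : (M.map f).PosDef := by
  classical
  cases nonempty_fintype n
  exact (posSemidef_map hM.posSemidef f hf).posDef_iff_isUnit.mpr (hM.isUnit.map f.mapMatrix)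

end ScalarExtension

section NegDef

variable {m n : Type*} [Fintype m] [Fintype n]

theorem negDef_iff_posDef_neg {M : Matrix n n ℝ} : NegDef M ↔ (-M).PosDef := by
  simp [NegDef, posDef_iff_dotProduct_mulVec, neg_mulVec, IsSymm, IsHermitian]

theorem NegDef.submatrix {M : Matrix n n ℝ} (hM : NegDef M) {e : m → n}
    (he : Function.Injective e) : NegDef (M.submatrix e e) :=
  negDef_iff_posDef_neg.mpr ((negDef_iff_posDef_neg.mp hM).submatrix he)

open scoped ComplexOrder in
theorem re_eigenvalue_neg_of_negDef_lyapunov {P M : Matrix n n ℝ} (hP : P.PosSemidef)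
    (hPM : NegDef (P * M + (P * M)ᵀ)) {μ : ℂ}
    (hμ : Module.End.HasEigenvalue (M.map (Complex.ofReal : ℝ → ℂ)).mulVecLin μ) : μ.re < 0 := by
  let ι : ℝ →+* ℂ := Complex.ofRealHom
  have ι_star : Function.Semiconj ι star star := fun r ↦ (Complex.conj_ofReal r).symm
  have map_lyapunov : (-(P * M + (P * M)ᵀ)).map ι =
      -(P.map ι * M.map ι + (P.map ι * M.map ι)ᴴ) := by
    rw [← Matrix.map_mul, ← conjTranspose_map ι ι_star, conjTranspose_eq_transpose_of_trivial,
      ← Matrix.map_add ι (map_add ι), Matrix.map_neg ι (map_neg ι)]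
  have complex_lyapunov : (-(P.map ι * M.map ι + (P.map ι * M.map ι)ᴴ)).PosDef :=
    map_lyapunov ▸ posDef_map (negDef_iff_posDef_neg.mp hPM) ι ι_star
  exact re_eigenvalue_neg_of_posDef_neg_lyapunov (posSemidef_map hP ι ι_star) complex_lyapunov hμ

theorem hinf_lmi_hurwitz_general {p : Type*} [Fintype p] [DecidableEq n]
    {A X : Matrix n n ℝ} {C : Matrix p n ℝ} {Y : Matrix n p ℝ}
    {B₁₂ : Matrix n m ℝ} {B₂₁ : Matrix m n ℝ} {B₂₂ : Matrix m m ℝ} (hX : X.PosDef)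
    (hLMI : NegDef (fromBlocks ((X * A + Y * C) + (X * A + Y * C)ᵀ) B₁₂ B₂₁ B₂₂)) {μ : ℂ}
    (hμ : Module.End.HasEigenvalue
      (Matrix.mulVecLin ((A + X⁻¹ * Y * C).map (Complex.ofReal : ℝ → ℂ))) μ) :
    μ.re < 0 := by
  have leading_block : NegDef ((X * A + Y * C) + (X * A + Y * C)ᵀ) :=
    hLMI.submatrix Sum.inl_injective
  have gain : X * (A + X⁻¹ * Y * C) = X * A + Y * C := by
    rw [Matrix.mul_add, Matrix.mul_assoc X⁻¹,
      mul_nonsing_inv_cancel_left _ _ hX.det_pos.ne'.isUnit]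
  exact re_eigenvalue_neg_of_negDef_lyapunov hX.posSemidef (gain ▸ leading_block) hμ

end NegDef

/-- Feasibility of the `H∞` LMI of Theorem 2 yields a stabilizing observer gain:
every complex eigenvalue of `A + X⁻¹ Y C_y` has negative real part. -/
theorem hinf_lmi_hurwitz {n nd ny nz : ℕ}
    (A : Matrix (Fin n) (Fin n) ℝ) (Cy : Matrix (Fin ny) (Fin n) ℝ)
    (Cz : Matrix (Fin nz) (Fin n) ℝ) (Bd : Matrix (Fin n) (Fin nd) ℝ)
    (Dd : Matrix (Fin ny) (Fin nd) ℝ)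
    (sd : Fin nd → ℝ) (Sd : Matrix (Fin nd) (Fin nd) ℝ) (hSd : Sd = diagonal sd)
    (X : Matrix (Fin n) (Fin n) ℝ) (Y : Matrix (Fin n) (Fin ny) ℝ)
    (hX : X.PosDef)
    (γ : ℝ) (hγ : 0 < γ)
    (β : Fin ny → ℝ) (hβ : ∀ i, 0 < β i)
    (hLMI : NegDef (fromBlocks
      ((X * A + Y * Cy) + (X * A + Y * Cy)ᵀ)
      (fromCols (X * Bd * Sd + Y * Dd * Sd) (fromCols Czᵀ Y))
      (fromRows (X * Bd * Sd + Y * Dd * Sd)ᵀ (fromRows Cz Yᵀ))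
      (fromBlocks (-(γ • (1 : Matrix (Fin nd) (Fin nd) ℝ))) 0 0
        (fromBlocks (-(γ • (1 : Matrix (Fin nz) (Fin nz) ℝ))) 0 0
          (-(diagonal β)))))) :
    ∀ μ : ℂ, Module.End.HasEigenvalue
      (Matrix.mulVecLin ((A + X⁻¹ * Y * Cy).map (Complex.ofReal : ℝ → ℂ))) μ →
      μ.re < 0 :=
  fun _ hμ ↦ hinf_lmi_hurwitz_general hX hLMI hμ
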